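/- arXiv:math/9801147 — 3 statements merged into one kernel-verified Lean document; each statement's English description precedes it below -/
import Mathlib

section
/- Let R be a finite partially ordered set and let z ∈ R be an element such that for every x ∈ R the pair {x, z} has a least upper bound in R, i.e. there exists m ∈ R with x ≤ m, z ≤ m, and m ≤ u for every u ∈ R satisfying x ≤ u and z ≤ u. Then the order complex |Δ(R)| is contractible. -/
/-!
Write `j x` for the join of `x` and `z`. Then `j` is monotone and `id ≤ j ≥ const z`, so it is enough
to know that two comparable monotone self-maps of a finite poset induce homotopic self-maps of the
order complex: the identity is then homotopic to a constant map.

The homotopy is constructed on a concrete model, the space `ChainSimplex R` of probability weights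
on `R` whose support is a chain. For `f ≤ g`, lay out the mass of a weight in increasing order along
`[0, 1]`, push the mass to the left of a cut `c` forward along `f` and the mass to the right of it
along `g` (`mix`). The result is again supported on a chain (`mix_total`), it is visibly continuous
in the weight and in `c`, and for `c = 0` and `c = 1` it gives the maps induced by `g` and `f`
(`push_homotopic`).

The model is homeomorphic to the realization of the nerve (`nonempty_homeomorph`). The adjunction
between realization and singular set yields a continuous map from `|nerve R|` to the model, and shows
that every point of `|nerve R|` lies in some simplex. Passing to a representative of minimal
dimension (`exists_reduced`), such a point is an interior point of a nondegenerate simplex and is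
determined by its weight; moreover finitely many simplices suffice, so `|nerve R|` is compact.
-/

open CategoryTheory

namespace OrderComplex
open Simplicial Opposite

/-! ### Characteristic maps and the universal property of the realization -/

section
variable {R : Type} [PartialOrder R]

/-- The characteristic map `Δⁿ → |nerve R|` of the (possibly degenerate) simplex of `nerve R` given
by a weakly increasing sequence `φ`, i.e. the singular simplex of `|nerve R|` to which the unit of
the adjunction between realization and singular set sends `φ`. -/
noncomputable def charMap {n : ℕ} (φ : Fin (n + 1) →o R) :
    C(stdSimplex ℝ (Fin (n + 1)), SSet.toTop.obj (nerve R)) :=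
  TopCat.toSSetObjEquiv _ (op ⦋n⦌) ((sSetTopAdj.unit.app (nerve R)).app (op ⦋n⦌) φ.monotone.functor)

lemma toSSetObjEquiv_map_simplex (Z : TopCat.{0}) {n m : ℕ} (θ : ⦋m⦌ ⟶ ⦋n⦌)
    (s : (TopCat.toSSet.obj Z).obj (op ⦋n⦌)) (p : stdSimplex ℝ (Fin (m + 1))) :
    TopCat.toSSetObjEquiv Z (op ⦋m⦌) ((TopCat.toSSet.obj Z).map θ.op s) p =
      TopCat.toSSetObjEquiv Z (op ⦋n⦌) s (stdSimplex.map θ p) := rfl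

lemma charMap_map {n m : ℕ} (φ : Fin (n + 1) →o R) (θ : Fin (m + 1) →o Fin (n + 1))
    (p : stdSimplex ℝ (Fin (m + 1))) :
    charMap φ (stdSimplex.map θ p) = charMap (φ.comp θ) p := by
  have h := ConcreteCategory.congr_hom
    ((sSetTopAdj.unit.app (nerve R)).naturality (SimplexCategory.mkHom θ).op) φ.monotone.functor
  exact (toSSetObjEquiv_map_simplex _ (SimplexCategory.mkHom θ) _ p).symm.trans
    (congrArg (fun s => TopCat.toSSetObjEquiv _ (op ⦋m⦌) s p) h.symm)

/-- A continuous map out of `|nerve R|` is determined by its composites with the characteristic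
maps. -/
lemma hom_ext {Z : TopCat.{0}} {f g : SSet.toTop.obj (nerve R) ⟶ Z}
    (h : ∀ (n : ℕ) (φ : Fin (n + 1) →o R) (p : stdSimplex ℝ (Fin (n + 1))),
      f (charMap φ p) = g (charMap φ p)) : f = g := by
  apply (sSetTopAdj.homEquiv _ _).injective
  ext n s
  induction n using Opposite.rec with | _ n
  induction n using SimplexCategory.rec with | _ n
  apply (TopCat.toSSetObjEquiv Z (op ⦋n⦌)).injective
  ext1 p
  exact h n ⟨s.obj, s.monotone⟩ p

/-- A family of maps on simplices, compatible with all simplicial operators, descends to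
`|nerve R|`. -/
lemma exists_desc {Z : TopCat.{0}}
    (F : ∀ (n : ℕ), (Fin (n + 1) →o R) → C(stdSimplex ℝ (Fin (n + 1)), Z))
    (hF : ∀ (n m : ℕ) (φ : Fin (n + 1) →o R) (θ : Fin (m + 1) →o Fin (n + 1))
      (p : stdSimplex ℝ (Fin (m + 1))), F n φ (stdSimplex.map θ p) = F m (φ.comp θ) p) :
    ∃ f : SSet.toTop.obj (nerve R) ⟶ Z, ∀ (n : ℕ) (φ : Fin (n + 1) →o R)
      (p : stdSimplex ℝ (Fin (n + 1))), f (charMap φ p) = F n φ p := by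
  let G : nerve R ⟶ TopCat.toSSet.obj Z :=
    { app := fun n => ↾fun s => (TopCat.toSSetObjEquiv Z n).symm (F n.unop.len ⟨s.obj, s.monotone⟩)
      naturality := by
        intro n m θ
        ext s
        apply (TopCat.toSSetObjEquiv Z m).injective
        ext1 p
        exact ((hF _ _ ⟨s.obj, s.monotone⟩ θ.unop.toOrderHom p).symm) }
  refine ⟨(sSetTopAdj.homEquiv _ _).symm G, fun n φ p => ?_⟩
  have h : sSetTopAdj.homEquiv _ _ ((sSetTopAdj.homEquiv _ _).symm G) = G :=
    Equiv.apply_symm_apply _ _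
  rw [Adjunction.homEquiv_unit] at h
  exact congrArg (fun k : nerve R ⟶ TopCat.toSSet.obj Z =>
    TopCat.toSSetObjEquiv Z (op ⦋n⦌) (k.app (op ⦋n⦌) φ.monotone.functor) p) h

/-- The characteristic maps are jointly surjective: a predicate on `|nerve R|` is a map to `Prop`
with the indiscrete topology, and the predicate of lying in the image of some `charMap` agrees with the
constant `True` on every simplex, so `hom_ext` applies. -/
lemma exists_charMap_eq (y : SSet.toTop.obj (nerve R)) :
    ∃ (n : ℕ) (φ : Fin (n + 1) →o R) (p : stdSimplex ℝ (Fin (n + 1))), charMap φ p = y := by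
  let Z : TopCat.{0} := @TopCat.of Prop ⊤
  let f : SSet.toTop.obj (nerve R) ⟶ Z := @TopCat.ofHom _ Prop _ ⊤
    (@ContinuousMap.mk _ Prop _ ⊤ (fun _ => True) continuous_top)
  let g : SSet.toTop.obj (nerve R) ⟶ Z := @TopCat.ofHom _ Prop _ ⊤
    (@ContinuousMap.mk _ Prop _ ⊤ (fun y => ∃ (n : ℕ) (φ : Fin (n + 1) →o R)
      (p : stdSimplex ℝ (Fin (n + 1))), charMap φ p = y) continuous_top)
  have h : f = g := hom_ext fun n φ p => (eq_true (⟨n, φ, p, rfl⟩ :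
    ∃ (m : ℕ) (ψ : Fin (m + 1) →o R) (q : stdSimplex ℝ (Fin (m + 1))),
      charMap ψ q = charMap φ p)).symm
  have h' : (True : Prop) = _ := ConcreteCategory.congr_hom h y
  exact h'.mp trivial
end

/-! ### Weights supported on chains -/

lemma exists_chain_enum {R : Type} [PartialOrder R] (S : Finset R) (hS : S.Nonempty)
    (h : ∀ x ∈ S, ∀ y ∈ S, x ≤ y ∨ y ≤ x) :
    ∃ (n : ℕ) (φ : Fin (n + 1) →o R), StrictMono φ ∧ Set.range φ = S := by
  classical
  let _ : LinearOrder S :=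
    { (inferInstance : PartialOrder S) with
      le_total := fun x y => h x x.2 y y.2
      toDecidableLE := Classical.decRel _ }
  obtain ⟨n, hn⟩ := Nat.exists_eq_succ_of_ne_zero hS.card_pos.ne'
  let e : Fin (n + 1) ≃o S := Fintype.orderIsoFinOfCardEq S (by simpa using hn)
  refine ⟨n, ⟨fun i => e i, fun i j hij => e.monotone hij⟩, fun i j hij => e.strictMono hij, ?_⟩
  ext r
  constructor
  · rintro ⟨i, rfl⟩
    exact (e i).2
  · exact fun hr => ⟨e.symm ⟨r, hr⟩, congrArg Subtype.val (e.apply_symm_apply ⟨r, hr⟩)⟩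

section
variable {R : Type} [PartialOrder R] [Fintype R]

variable (R) in
/-- The concrete model of the order complex: probability weights on `R` whose support is a chain,
with the subspace topology from `R → ℝ`. -/
def ChainSimplex : Type :=
  {w : stdSimplex ℝ R // ∀ x y, w x ≠ 0 → w y ≠ 0 → x ≤ y ∨ y ≤ x}

instance : TopologicalSpace (ChainSimplex R) := inferInstanceAs (TopologicalSpace (Subtype _))
instance : T2Space (ChainSimplex R) := inferInstanceAs (T2Space (Subtype _))

lemma exists_of_map_ne_zero {X Y : Type} [Fintype X] [Fintype Y] (f : X → Y)
    (p : stdSimplex ℝ X) {y : Y} (h : stdSimplex.map f p y ≠ 0) : ∃ x, f x = y ∧ p x ≠ 0 := by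
  classical
  rw [stdSimplex.map_coe, FunOnFinite.linearMap_apply_apply] at h
  obtain ⟨x, hx, hx'⟩ := Finset.exists_ne_zero_of_sum_ne_zero h
  exact ⟨x, (Finset.mem_filter.1 hx).2, hx'⟩

lemma map_apply_of_injective {X Y : Type} [Fintype X] [Fintype Y] {f : X → Y}
    (hf : Function.Injective f) (p : stdSimplex ℝ X) (x : X) :
    stdSimplex.map f p (f x) = p x := by
  classical
  rw [stdSimplex.map_coe, FunOnFinite.linearMap_apply_apply]
  rw [Finset.sum_eq_single x] <;> simp +contextual [hf.eq_iff]

lemma exists_map_eq {X Y : Type} [Fintype X] [Fintype Y] {f : X → Y}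
    (hf : Function.Injective f) (p : stdSimplex ℝ Y) (hp : ∀ y, p y ≠ 0 → y ∈ Set.range f) :
    ∃ q : stdSimplex ℝ X, stdSimplex.map f q = p := by
  have hsum : ∑ x, p (f x) = 1 := by
    rw [← (stdSimplex.sum_eq_one p)]
    exact Fintype.sum_of_injective f hf _ _
      (fun y hy => by by_contra h; exact hy (hp y h)) (fun _ => rfl)
  let q : stdSimplex ℝ X := ⟨fun x => p (f x), fun x => stdSimplex.zero_le p _, hsum⟩
  refine ⟨q, stdSimplex.ext (funext fun y => ?_)⟩
  by_cases hy : y ∈ Set.range f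
  · obtain ⟨x, rfl⟩ := hy
    exact map_apply_of_injective hf q x
  · rw [not_imp_comm.1 (hp y) hy]
    by_contra h
    obtain ⟨x, hx, -⟩ := exists_of_map_ne_zero f q h
    exact hy ⟨x, hx⟩

/-- A monotone map carries chains to chains, so pushforward preserves `ChainSimplex`. -/
lemma map_mem (w : ChainSimplex R) {f : R → R} (hf : Monotone f) :
    ∀ x y, stdSimplex.map f w.1 x ≠ 0 → stdSimplex.map f w.1 y ≠ 0 → x ≤ y ∨ y ≤ x := by
  intro x y hx hy
  obtain ⟨a, rfl, ha⟩ := exists_of_map_ne_zero _ _ hx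
  obtain ⟨b, rfl, hb⟩ := exists_of_map_ne_zero _ _ hy
  exact (w.2 a b ha hb).imp (fun h => hf h) (fun h => hf h)

/-- The self-map of `ChainSimplex R` induced by a monotone map: pushforward of weights. -/
noncomputable def push (f : R → R) (hf : Monotone f) : C(ChainSimplex R, ChainSimplex R) where
  toFun w := ⟨stdSimplex.map f w.1, map_mem w hf⟩
  continuous_toFun := ((stdSimplex.continuous_map f).comp continuous_subtype_val).subtype_mk _

/-! ### Comparable monotone maps induce homotopic maps -/

open Classical in
/-- The total weight strictly below `x`. When the support of `w` is a chain, laying out the weights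
in increasing order along `[0, 1]` makes `x` occupy the interval from `massBelow w x` to
`massBelow w x + w x`. -/
noncomputable def massBelow (w : R → ℝ) (x : R) : ℝ := ∑ y with y < x, w y

/-- The length of the part of the interval occupied by `x` that lies to the left of the cut `c`. -/
noncomputable def lowPart (w : R → ℝ) (c : ℝ) (x : R) : ℝ :=
  min (massBelow w x + w x) c - min (massBelow w x) c

lemma massBelow_nonneg (w : stdSimplex ℝ R) (x : R) : 0 ≤ massBelow w x :=
  Finset.sum_nonneg fun _ _ => stdSimplex.zero_le w _

lemma massBelow_add_le_one (w : stdSimplex ℝ R) (x : R) : massBelow w x + w x ≤ 1 := by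
  classical
  rw [← (stdSimplex.sum_eq_one w), massBelow, add_comm, ← Finset.sum_insert (by simp)]
  exact Finset.sum_le_sum_of_subset_of_nonneg (Finset.subset_univ _) fun _ _ _ => stdSimplex.zero_le w _

lemma massBelow_add_le_of_lt (w : stdSimplex ℝ R) {x y : R} (h : x < y) :
    massBelow w x + w x ≤ massBelow w y := by
  classical
  rw [massBelow, massBelow, add_comm, ← Finset.sum_insert (by simp)]
  refine Finset.sum_le_sum_of_subset_of_nonneg (fun z hz => ?_) fun _ _ _ => stdSimplex.zero_le w _
  simp only [Finset.mem_insert, Finset.mem_filter, Finset.mem_univ, true_and] at hz ⊢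
  rcases hz with rfl | hz
  exacts [h, hz.trans h]

lemma lowPart_nonneg (w : stdSimplex ℝ R) (c : ℝ) (x : R) : 0 ≤ lowPart w c x :=
  sub_nonneg.2 (min_le_min_right c (by linarith [stdSimplex.zero_le w x]))

lemma lowPart_le (w : stdSimplex ℝ R) (c : ℝ) (x : R) : lowPart w c x ≤ w x := by
  have := stdSimplex.zero_le w x
  unfold lowPart
  rcases min_cases (massBelow w x + w x) c with h | h <;>
    rcases min_cases (massBelow w x) c with h' | h' <;> linarith

lemma lt_of_lowPart_ne_zero (w : stdSimplex ℝ R) {c : ℝ} {x : R} (h : lowPart w c x ≠ 0) :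
    massBelow w x < c := by
  by_contra! hc
  refine h ?_
  rw [lowPart, min_eq_right hc, min_eq_right (by linarith [stdSimplex.zero_le w x]), sub_self]

lemma lt_of_lowPart_ne (w : stdSimplex ℝ R) {c : ℝ} {x : R} (h : w x - lowPart w c x ≠ 0) :
    c < massBelow w x + w x := by
  by_contra! hc
  refine h ?_
  rw [lowPart, min_eq_left hc, min_eq_left (by linarith [stdSimplex.zero_le w x])]
  ring

open Classical in
/-- The weight obtained by pushing the mass to the left of the cut `c` forward along `f` and the
rest forward along `g`. This is the prism homotopy written without subdividing the prism. -/
noncomputable def mix (f g : R → R) (w : R → ℝ) (c : ℝ) (r : R) : ℝ :=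
  (∑ x with f x = r, lowPart w c x) + ∑ x with g x = r, (w x - lowPart w c x)

lemma mix_mem (f g : R → R) (w : stdSimplex ℝ R) (c : ℝ) : mix f g w c ∈ stdSimplex ℝ R := by
  classical
  constructor
  · intro r
    exact add_nonneg (Finset.sum_nonneg fun x _ => lowPart_nonneg w c x)
      (Finset.sum_nonneg fun x _ => sub_nonneg.2 (lowPart_le w c x))
  · simp only [mix]
    have fiberwise (k : R → R) (v : R → ℝ) : ∑ r, ∑ x with k x = r, v x = ∑ x, v x := by
      convert! Finset.sum_fiberwise Finset.univ k v
    rw [Finset.sum_add_distrib, fiberwise, fiberwise, ← Finset.sum_add_distrib]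
    simp

lemma exists_of_mix_ne_zero {f g : R → R} {w : stdSimplex ℝ R} {c : ℝ} {r : R}
    (h : mix f g w c r ≠ 0) :
    (∃ x, f x = r ∧ w x ≠ 0 ∧ massBelow w x < c) ∨
      ∃ x, g x = r ∧ w x ≠ 0 ∧ c < massBelow w x + w x := by
  classical
  by_cases h1 : (∑ x with f x = r, lowPart w c x) = 0
  · have h2 : (∑ x with g x = r, (w x - lowPart w c x)) ≠ 0 := by
      intro h2
      exact h (by rw [mix, h1, h2, add_zero])
    obtain ⟨x, hx, hx'⟩ := Finset.exists_ne_zero_of_sum_ne_zero h2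
    refine .inr ⟨x, (Finset.mem_filter.1 hx).2, fun h0 => hx' ?_, lt_of_lowPart_ne w hx'⟩
    linarith [lowPart_nonneg w c x, lowPart_le w c x]
  · obtain ⟨x, hx, hx'⟩ := Finset.exists_ne_zero_of_sum_ne_zero h1
    refine .inl ⟨x, (Finset.mem_filter.1 hx).2, fun h0 => hx' ?_, lt_of_lowPart_ne_zero w hx'⟩
    linarith [lowPart_nonneg w c x, lowPart_le w c x]

/-- A point having mass to the left of the cut is below every point having mass to the right of it. -/
lemma le_of_massBelow_lt {w : ChainSimplex R} {c : ℝ} {x y : R} (hx : w.1 x ≠ 0) (hy : w.1 y ≠ 0)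
    (hxc : massBelow w.1 x < c) (hyc : c < massBelow w.1 y + w.1 y) : x ≤ y := by
  rcases w.2 x y hx hy with h | h
  · exact h
  · rcases h.lt_or_eq with h | h
    · linarith [massBelow_add_le_of_lt w.1 h]
    · exact h.ge

/-- The support of `mix f g w c` is a chain: if `x` contributes to the left of the cut and `y` to the
right, then `x ≤ y`, hence `f x ≤ f y ≤ g y`. -/
lemma mix_total {f g : R → R} (hf : Monotone f) (hg : Monotone g) (hfg : ∀ x, f x ≤ g x)
    (w : ChainSimplex R) (c : ℝ) (r s : R) (hr : mix f g w.1 c r ≠ 0) (hs : mix f g w.1 c s ≠ 0) :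
    r ≤ s ∨ s ≤ r := by
  rcases exists_of_mix_ne_zero hr with ⟨x, rfl, hx, hxc⟩ | ⟨x, rfl, hx, hxc⟩ <;>
    rcases exists_of_mix_ne_zero hs with ⟨y, rfl, hy, hyc⟩ | ⟨y, rfl, hy, hyc⟩
  · exact (w.2 x y hx hy).imp (fun h => hf h) (fun h => hf h)
  · exact .inl ((hf (le_of_massBelow_lt hx hy hxc hyc)).trans (hfg y))
  · exact .inr ((hf (le_of_massBelow_lt hy hx hyc hxc)).trans (hfg x))
  · exact (w.2 x y hx hy).imp (fun h => hg h) (fun h => hg h)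

lemma mix_zero (f g : R → R) (w : stdSimplex ℝ R) : mix f g w 0 = stdSimplex.map g w := by
  classical
  have h (x : R) : lowPart w 0 x = 0 := by
    have := massBelow_nonneg w x
    rw [lowPart, min_eq_right this, min_eq_right (by linarith [stdSimplex.zero_le w x]), sub_self]
  funext r
  rw [stdSimplex.map_coe, FunOnFinite.linearMap_apply_apply]
  simp [mix, h]

lemma mix_one (f g : R → R) (w : stdSimplex ℝ R) : mix f g w 1 = stdSimplex.map f w := by
  classical
  have h (x : R) : lowPart w 1 x = w x := by
    have := massBelow_add_le_one w x
    rw [lowPart, min_eq_left this, min_eq_left (by linarith [stdSimplex.zero_le w x])]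
    ring
  funext r
  rw [stdSimplex.map_coe, FunOnFinite.linearMap_apply_apply]
  simp [mix, h]

lemma continuous_mix (f g : R → R) :
    Continuous fun q : (R → ℝ) × ℝ => mix f g q.1 q.2 := by
  unfold mix lowPart massBelow
  fun_prop

/-- The homotopy moves the cut from `0`, where everything is pushed along `g`, to `1`, where
everything is pushed along `f`. -/
lemma push_homotopic {f g : R → R} (hf : Monotone f) (hg : Monotone g) (hfg : ∀ x, f x ≤ g x) :
    (push g hg).Homotopic (push f hf) :=
  ⟨{toFun := fun q => ⟨⟨mix f g q.2.1 q.1, mix_mem f g q.2.1 q.1⟩, mix_total hf hg hfg q.2 q.1⟩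
    continuous_toFun := by
      refine Continuous.subtype_mk (Continuous.subtype_mk ((continuous_mix f g).comp
        (Continuous.prodMk ?_ ?_)) _) _
      · exact continuous_subtype_val.comp (continuous_subtype_val.comp continuous_snd)
      · exact continuous_subtype_val.comp continuous_fst
    map_zero_left := fun w => Subtype.ext (stdSimplex.ext (mix_zero f g w.1))
    map_one_left := fun w => Subtype.ext (stdSimplex.ext (mix_one f g w.1)) }⟩

lemma push_id : push (id : R → R) monotone_id = ContinuousMap.id _ :=
  ContinuousMap.ext fun w => Subtype.ext (stdSimplex.map_id_apply w.1)

lemma push_const (z : R) : ∃ w₀, push (fun _ : R => z) monotone_const = ContinuousMap.const _ w₀ := by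
  classical
  refine ⟨⟨stdSimplex.vertex z, fun x y hx hy => ?_⟩, ContinuousMap.ext fun w =>
    Subtype.ext (stdSimplex.ext (funext fun r => ?_))⟩
  · have aux (x : R) (h : stdSimplex.vertex (S := ℝ) z x ≠ 0) : x = z := by
      by_contra hne
      exact h (Pi.single_eq_of_ne hne _)
    rw [aux x hx, aux y hy]
    exact .inl le_rfl
  · change stdSimplex.map (fun _ : R => z) w.1 r = (Pi.single z 1 : R → ℝ) r
    rw [stdSimplex.map_coe, FunOnFinite.linearMap_apply_apply]
    by_cases h : z = r
    · subst h
      simp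
    · simp [h]

lemma contractibleSpace_chainSimplex (z : R) (j : R → R) (hj : Monotone j) (hle : ∀ x, x ≤ j x)
    (hz : ∀ x, z ≤ j x) : ContractibleSpace (ChainSimplex R) := by
  rw [contractible_iff_id_nullhomotopic]
  obtain ⟨w₀, hw₀⟩ := push_const z
  refine ⟨w₀, ?_⟩
  rw [← hw₀, ← push_id]
  exact (push_homotopic monotone_id hj hle).symm.trans (push_homotopic monotone_const hj hz)

/-! ### The realization of the nerve as a space of weights -/

/-- Every point of `|nerve R|` is an interior point of a nondegenerate simplex: take a
representative of minimal dimension. A repeated vertex or a vanishing coordinate would allow it to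
be represented in one dimension less. -/
lemma exists_reduced {R : Type} [PartialOrder R] (y : SSet.toTop.obj (nerve R)) :
    ∃ (n : ℕ) (φ : Fin (n + 1) →o R) (p : stdSimplex ℝ (Fin (n + 1))),
      charMap φ p = y ∧ StrictMono φ ∧ ∀ i, p i ≠ 0 := by
  classical
  have hex := exists_charMap_eq y
  obtain ⟨φ, p, hy⟩ := Nat.find_spec hex
  have hmin : ∀ m < Nat.find hex, ¬ ∃ (φ : Fin (m + 1) →o R) (p : stdSimplex ℝ (Fin (m + 1))),
      charMap φ p = y := fun m hm => Nat.find_min hex hm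
  generalize Nat.find hex = n at φ p hy hmin
  refine ⟨n, φ, p, hy, ?_, fun i hi => ?_⟩
  · rw [Fin.strictMono_iff_lt_succ]
    intro i
    -- If `φ i.castSucc = φ i.succ`, then `φ` factors through the degeneracy collapsing these two.
    refine lt_of_le_of_ne (φ.monotone (Fin.castSucc_le_succ i)) fun hi => ?_
    obtain _ | n := n
    · exact i.elim0
    let σ : Fin (n + 1 + 1) →o Fin (n + 1) := ⟨i.predAbove, Fin.predAbove_right_monotone i⟩
    let δ : Fin (n + 1) →o Fin (n + 1 + 1) := (Fin.succAboveOrderEmb i.succ).toOrderHom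
    have hφ : (φ.comp δ).comp σ = φ := by
      ext k
      change φ (i.succ.succAbove (i.predAbove k)) = φ k
      rcases eq_or_ne k i.succ with rfl | hk
      · simpa using hi
      · congr 1
        simp [Fin.succ_succAbove_predAbove, hk]
    exact hmin n (Nat.lt_succ_self n) ⟨φ.comp δ, stdSimplex.map σ p, by rw [charMap_map, hφ, hy]⟩
  · obtain _ | n := n
    · have := (stdSimplex.sum_eq_one p)
      rw [Fin.sum_univ_one, ← Fin.fin_one_eq_zero i, hi] at this
      exact zero_ne_one this
    -- If `p i = 0`, then `p` lies on the face opposite to `i`.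
    obtain ⟨q, hq⟩ := exists_map_eq (Fin.succAbove_right_injective (p := i)) p (fun k hk => by
      rw [Fin.range_succAbove]
      rintro rfl
      exact hk hi)
    exact hmin n (Nat.lt_succ_self n) ⟨φ.comp (Fin.succAboveOrderEmb i).toOrderHom, q, by
      rw [← charMap_map, ← hy, ← hq]; rfl⟩

/-- Only the finitely many nondegenerate simplices are needed to cover `|nerve R|`, and each has
compact image. -/
instance : CompactSpace (SSet.toTop.obj (nerve R)) := by
  have h : (Set.univ : Set (SSet.toTop.obj (nerve R))) =
      ⋃ (n : Fin (Fintype.card R)) (φ : Fin (n + 1) →o R), Set.range (charMap φ) := by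
    refine (Set.eq_univ_of_forall fun y => ?_).symm
    obtain ⟨n, φ, p, hy, hφ, -⟩ := exists_reduced y
    have hn := Fintype.card_le_of_injective φ hφ.injective
    rw [Fintype.card_fin] at hn
    exact Set.mem_iUnion₂.2 ⟨⟨n, hn⟩, φ, p, hy⟩
  have (n : ℕ) : Finite (Fin (n + 1) →o R) := DFunLike.finite _
  refine ⟨h ▸ ?_⟩
  exact isCompact_iUnion fun n => isCompact_iUnion fun φ => isCompact_range (charMap φ).continuous

/-- For an interior point of a nondegenerate simplex, the vertices of the simplex are recovered as
the support of the associated weight. -/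
lemma range_eq_of_reduced {n : ℕ} {φ : Fin (n + 1) →o R} {p : stdSimplex ℝ (Fin (n + 1))}
    (hφ : StrictMono φ) (hp : ∀ i, p i ≠ 0) : Set.range φ = {r | stdSimplex.map φ p r ≠ 0} := by
  ext r
  constructor
  · rintro ⟨i, rfl⟩
    simpa only [Set.mem_ofPred_eq, map_apply_of_injective hφ.injective] using hp i
  · intro h
    obtain ⟨i, hi, -⟩ := exists_of_map_ne_zero _ _ h
    exact ⟨i, hi⟩

variable (R) in
/-- The realization of the nerve of a finite poset is homeomorphic to its space of weights, through
the map sending `charMap φ p` to the pushforward of `p` along `φ`. It is bijective because an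
interior point of a nondegenerate simplex is determined by its weight and every chain can be
enumerated; it is a homeomorphism as a continuous bijection from a compact to a Hausdorff space. -/
theorem nonempty_homeomorph : Nonempty (SSet.toTop.obj (nerve R) ≃ₜ ChainSimplex R) := by
  classical
  obtain ⟨f, hf⟩ := exists_desc (R := R) (Z := TopCat.of (ChainSimplex R))
    (fun n φ => ⟨fun p => ⟨stdSimplex.map φ p, fun x y hx hy => by
        obtain ⟨i, rfl, -⟩ := exists_of_map_ne_zero _ _ hx
        obtain ⟨j, rfl, -⟩ := exists_of_map_ne_zero _ _ hy
        exact (le_total i j).imp (fun h => φ.monotone h) (fun h => φ.monotone h)⟩,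
      (stdSimplex.continuous_map φ).subtype_mk _⟩)
    (fun n m φ θ p => Subtype.ext (stdSimplex.map_comp_apply θ φ p))
  have hf' (n : ℕ) (φ : Fin (n + 1) →o R) (p : stdSimplex ℝ (Fin (n + 1))) :
      Subtype.val (f (charMap φ p)) = stdSimplex.map φ p := congrArg Subtype.val (hf n φ p)
  have hinj : Function.Injective f := by
    intro y y' hyy'
    obtain ⟨n, φ, p, rfl, hφ, hp⟩ := exists_reduced y
    obtain ⟨m, ψ, q, rfl, hψ, hq⟩ := exists_reduced y'
    have hmap : stdSimplex.map φ p = stdSimplex.map ψ q := by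
      rw [← hf', ← hf', hyy']
    have hrange : Set.range φ = Set.range ψ := by
      rw [range_eq_of_reduced hφ hp, range_eq_of_reduced hψ hq, hmap]
    obtain rfl : n = m := by
      have := congrArg Set.ncard hrange
      rw [Set.ncard_range_of_injective hφ.injective, Set.ncard_range_of_injective hψ.injective]
        at this
      simpa using this
    obtain rfl : φ = ψ := DFunLike.coe_injective ((hφ.range_inj hψ).1 hrange)
    congr 1
    refine stdSimplex.ext (funext fun i => ?_)
    rw [← map_apply_of_injective hφ.injective p, hmap, map_apply_of_injective hφ.injective]
  have hsurj : Function.Surjective f := by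
    intro w
    change ChainSimplex R at w
    obtain ⟨n, φ, hφ, hr⟩ := exists_chain_enum {x | w.1 x ≠ 0} (by
      obtain ⟨x, -, hx⟩ := Finset.exists_ne_zero_of_sum_ne_zero
        ((stdSimplex.sum_eq_one w.1).trans_ne one_ne_zero)
      exact ⟨x, by simpa using hx⟩)
      (fun x hx y hy => w.2 x y (by simpa using hx) (by simpa using hy))
    obtain ⟨p, hp⟩ := exists_map_eq hφ.injective w.1 (fun y hy => by rw [hr]; simpa using hy)
    exact ⟨charMap φ p, Subtype.ext ((hf' n φ p).trans hp)⟩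
  exact ⟨Continuous.homeoOfEquivCompactToT2 (f := Equiv.ofBijective f ⟨hinj, hsurj⟩)
    f.hom.continuous⟩
end

end OrderComplex

/-- If `R` is a finite poset and `z ∈ R` is such that every `x ∈ R` has a least upper
bound with `z` in `R`, then the order complex of `R` is contractible. -/
theorem order_complex_contractible_of_joins_with
    {R : Type} [PartialOrder R] [Fintype R] (z : R)
    (h : ∀ x : R, ∃ m : R, x ≤ m ∧ z ≤ m ∧ ∀ u : R, x ≤ u → z ≤ u → m ≤ u) :
    ContractibleSpace (SSet.toTop.obj (nerve R)) := by
  choose j hxj hzj hj using h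
  -- Leastness of the join is used only to see that `j x = x ∨ z` is monotone in `x`.
  have hmono : Monotone j := fun x y hxy => hj x _ (hxy.trans (hxj y)) (hzj y)
  have := OrderComplex.contractibleSpace_chainSimplex z j hmono hxj hzj
  obtain ⟨e⟩ := OrderComplex.nonempty_homeomorph R
  exact e.contractibleSpace
end

section
/- Let n ≥ 2. Let M = { A : Matrix (Fin n) (Fin n) ℝ | A.IsSymm ∧ ∀ c : ℝ, A ≠ c • 1 } be the space of symmetric real n × n matrices that are not scalar multiples of the identity, with the subspace topology, and consider the equivalence relation on M given by A ≈ B if and only if there exist α > 0 and β ∈ ℝ with B = α • A + β • 1. Then the quotient space M/≈ (with the quotient topology) is homeomorphic to the sphere of dimension (n choose 2) + n − 2, i.e. to Metric.sphere (0 : EuclideanSpace ℝ (Fin (n·(n+1)/2 − 1))) 1. -/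
/-!
Choose a surjective linear map `q` from the symmetric matrices onto Euclidean space of dimension
`n(n+1)/2 - 1` whose kernel is the line of scalar matrices; it exists by counting dimensions,
since symmetric matrices are functions on unordered pairs of indices. Then a symmetric matrix is
nonscalar exactly when `q A ≠ 0`, and `B = α A + β I` with `α > 0` exactly when `q B = α q A`.
So `A ↦ q A / ‖q A‖` descends to the quotient, and a linear section of `q`, restricted to the
unit sphere, provides the inverse. Both maps are continuous because linear maps between
finite-dimensional spaces are.
-/

/-- The space of symmetric real `n × n` matrices, as a submodule of all matrices. -/
def symmMatrices (n : ℕ) : Submodule ℝ (Matrix (Fin n) (Fin n) ℝ) where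
  carrier := {A | A.IsSymm}
  add_mem' ha hb := Matrix.IsSymm.add ha hb
  zero_mem' := Matrix.isSymm_zero
  smul_mem' c _ ha := Matrix.IsSymm.smul ha c

/-- Symmetric matrices are the functions on unordered pairs of indices. -/
def symmMatricesEquiv (n : ℕ) : (Sym2 (Fin n) → ℝ) ≃ₗ[ℝ] symmMatrices n where
  toFun f := ⟨Matrix.of fun i j => f s(i, j), by
    ext i j
    simp [Sym2.eq_swap]⟩
  map_add' _ _ := rfl
  map_smul' _ _ := rfl
  invFun A := Sym2.lift ⟨fun i j => A.1 i j, fun i j => (Matrix.IsSymm.apply A.2 j i)⟩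
  left_inv f := by
    funext p
    induction p with
    | _ i j => rfl
  right_inv A := by
    ext i j
    rfl

theorem finrank_symmMatrices (n : ℕ) :
    Module.finrank ℝ (symmMatrices n) = n * (n + 1) / 2 := by
  rw [← (symmMatricesEquiv n).finrank_eq, Module.finrank_fintype_fun_eq_card, Sym2.card,
    Fintype.card_fin, Nat.choose_two_right, Nat.add_sub_cancel, mul_comm]

theorem exists_linearMap_ker_scalars (n : ℕ) (hn : 2 ≤ n) :
    ∃ q : symmMatrices n →ₗ[ℝ] EuclideanSpace ℝ (Fin (n * (n + 1) / 2 - 1)),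
      Function.Surjective q ∧
        ∀ A, q A = 0 ↔ ∃ c : ℝ, (A : Matrix (Fin n) (Fin n) ℝ) = c • 1 := by
  have : Nonempty (Fin n) := ⟨⟨0, by omega⟩⟩
  let I : symmMatrices n := ⟨1, Matrix.isSymm_one⟩
  have hI : I ≠ 0 := fun h => one_ne_zero (congrArg Subtype.val h)
  let K : Submodule ℝ (symmMatrices n) := ℝ ∙ I
  have hK : Module.finrank ℝ K = 1 := finrank_span_singleton hI
  have hq : Module.finrank ℝ (symmMatrices n ⧸ K) =
      Module.finrank ℝ (EuclideanSpace ℝ (Fin (n * (n + 1) / 2 - 1))) := by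
    have h := K.finrank_quotient_add_finrank
    rw [hK, finrank_symmMatrices] at h
    rw [finrank_euclideanSpace_fin]
    omega
  let e := LinearEquiv.ofFinrankEq _ _ hq
  refine ⟨e.toLinearMap ∘ₗ K.mkQ, e.surjective.comp K.mkQ_surjective, fun A => ?_⟩
  simp only [LinearMap.comp_apply, LinearEquiv.coe_coe, LinearEquiv.map_eq_zero_iff,
    Submodule.mkQ_apply, Submodule.Quotient.mk_eq_zero, K, Submodule.mem_span_singleton]
  refine exists_congr fun c => ?_
  rw [eq_comm, Subtype.ext_iff]
  rfl


/-- The space of symmetric real `n × n` matrices that are not scalar multiples of the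
identity, modulo the action `(α, β) · A = α • A + β • I` of `ℝ⁺ × ℝ`, is homeomorphic to
the sphere of dimension `(n choose 2) + n − 2`.  (This quotient is homeomorphic to the
order complex of the truncated Grassmannian poset `G̃_n(ℝ)`.) -/
theorem quotient_nonscalar_symmetric_homeomorph_sphere (n : ℕ) (hn : 2 ≤ n) :
    Nonempty (
      Quot (fun A B : {A : Matrix (Fin n) (Fin n) ℝ //
          A.IsSymm ∧ ∀ c : ℝ, A ≠ c • (1 : Matrix (Fin n) (Fin n) ℝ)} =>
        ∃ α : ℝ, 0 < α ∧ ∃ β : ℝ,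
          (B : Matrix (Fin n) (Fin n) ℝ) =
            α • (A : Matrix (Fin n) (Fin n) ℝ) + β • (1 : Matrix (Fin n) (Fin n) ℝ)) ≃ₜ
      Metric.sphere (0 : EuclideanSpace ℝ (Fin (n * (n + 1) / 2 - 1))) 1) := by
  obtain ⟨q, hsurj, hker⟩ := exists_linearMap_ker_scalars n hn
  obtain ⟨s, hs⟩ := q.exists_rightInverse_of_surjective (LinearMap.range_eq_top.2 hsurj)
  replace hs : ∀ v, q (s v) = v := fun v => LinearMap.congr_fun hs v
  have hqc : Continuous q := q.continuous_of_finiteDimensional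
  have hsc : Continuous s := s.continuous_of_finiteDimensional
  let M := {A : Matrix (Fin n) (Fin n) ℝ //
    A.IsSymm ∧ ∀ c : ℝ, A ≠ c • (1 : Matrix (Fin n) (Fin n) ℝ)}
  let r : M → M → Prop := fun A B => ∃ α : ℝ, 0 < α ∧ ∃ β : ℝ,
    (B : Matrix (Fin n) (Fin n) ℝ) =
      α • (A : Matrix (Fin n) (Fin n) ℝ) + β • (1 : Matrix (Fin n) (Fin n) ℝ)
  let Q : M → EuclideanSpace ℝ (Fin (n * (n + 1) / 2 - 1)) := fun A => q ⟨A.1, A.2.1⟩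
  have hQc : Continuous Q := hqc.comp (continuous_subtype_val.subtype_mk _)
  have hQ0 : ∀ A, Q A ≠ 0 := fun A h => by
    obtain ⟨c, hc⟩ := (hker _).1 h
    exact A.2.2 c hc
  have hQn : ∀ A, 0 < ‖Q A‖ := fun A => norm_pos_iff.2 (hQ0 A)
  have hrel : ∀ (A B : M) (α : ℝ), Q B = α • Q A ↔ ∃ β : ℝ, B.1 = α • A.1 + β • 1 := by
    intro A B α
    rw [← sub_eq_zero, ← map_smul, ← map_sub, hker]
    refine exists_congr fun β => ?_
    rw [← sub_eq_iff_eq_add']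
    rfl
  let f : M → Metric.sphere (0 : EuclideanSpace ℝ (Fin (n * (n + 1) / 2 - 1))) 1 := fun A =>
    ⟨‖Q A‖⁻¹ • Q A, by
      rw [mem_sphere_zero_iff_norm, norm_smul, norm_inv, norm_norm,
        inv_mul_cancel₀ (hQn A).ne']⟩
  have hfc : Continuous f :=
    ((hQc.norm.inv₀ fun A => (hQn A).ne').smul hQc).subtype_mk _
  have hf : ∀ A B, r A B → f A = f B := by
    rintro A B ⟨α, hα, hβ⟩
    have h := (hrel A B α).2 hβ
    ext1
    change ‖Q A‖⁻¹ • Q A = ‖Q B‖⁻¹ • Q B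
    rw [h, norm_smul, Real.norm_of_nonneg hα.le, smul_smul]
    congr 1
    have := (hQn A).ne'
    field_simp
  let g : Metric.sphere (0 : EuclideanSpace ℝ (Fin (n * (n + 1) / 2 - 1))) 1 → M := fun v =>
    ⟨(s v.1).1, (s v.1).2, fun c hc => by
      have h := (hker (s v.1)).2 ⟨c, hc⟩
      rw [hs] at h
      exact ne_zero_of_mem_unit_sphere v h⟩
  have hgc : Continuous g :=
    (continuous_subtype_val.comp (hsc.comp continuous_subtype_val)).subtype_mk _
  have hQg : ∀ v, Q (g v) = v := fun v => hs v
  refine ⟨(?_ : Quot r ≃ₜ _)⟩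
  exact
    { toFun := Quot.lift f hf
      invFun := fun v => Quot.mk r (g v)
      left_inv := by
        rintro ⟨A⟩
        refine Quot.sound ⟨‖Q A‖, hQn A, (hrel _ _ _).1 ?_⟩
        rw [hQg]
        exact (smul_inv_smul₀ (hQn A).ne' _).symm
      right_inv := fun v => by
        ext1
        change ‖Q (g v)‖⁻¹ • Q (g v) = v
        rw [hQg, norm_eq_of_mem_sphere, inv_one, one_smul]
      continuous_toFun := continuous_quot_lift hf hfc
      continuous_invFun := continuous_quot_mk.comp hgc }
end

section
/- Let n ≥ 1. Let F(ℝ, n) = { x : Fin n → ℝ | Function.Injective x } with the subspace topology, acted on by Equiv.Perm (Fin n) via (σ • x) i = x (σ⁻¹ i), and let B(ℝ, n) be the orbit space with the quotient topology. Then the one-point compactification OnePoint (B(ℝ, n)) is homeomorphic to the n-dimensional sphere Sⁿ = Metric.sphere (0 : EuclideanSpace ℝ (Fin (n+1))) 1. -/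
/-!
Sorting identifies `B(ℝ, m + 1)` with the open cone of strictly increasing tuples
`x₀ < x₁ < ⋯ < xₘ`, and such a tuple is determined by `x₀` and the logarithms of its successive
gaps, which are arbitrary reals. This gives a homeomorphism `B(ℝ, m + 1) ≃ₜ ℝ^(m + 1)`
(`quotHomeo`), and the one-point compactification of a real vector space of dimension `n` is `Sⁿ`
by stereographic projection. The only delicate point is that sorting is continuous on injective
tuples (`continuous_sorted`): a permutation sorting an injective tuple strictly also sorts all
nearby tuples, so locally sorting is composition with a fixed permutation.
-/

namespace ConfReal

/-- The configuration space `F(ℝ, n)` of ordered `n`-tuples of distinct reals. -/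
abbrev Conf (n : ℕ) := {x : Fin n → ℝ // Function.Injective x}

/-- The relation of lying in the same orbit of the symmetric group. -/
abbrev orbitRel (n : ℕ) (x y : Conf n) : Prop :=
  ∃ σ : Equiv.Perm (Fin n), ∀ i, (y : Fin n → ℝ) i = (x : Fin n → ℝ) (σ⁻¹ i)

/-- The increasing rearrangement of a tuple. -/
noncomputable def sorted {n : ℕ} (x : Fin n → ℝ) : Fin n → ℝ := x ∘ Tuple.sort x

lemma sorted_strictMono {n : ℕ} (x : Conf n) : StrictMono (sorted x.1) :=
  (Tuple.monotone_sort x.1).strictMono_of_injective (x.2.comp (Tuple.sort x.1).injective)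

lemma continuous_sorted (n : ℕ) : Continuous fun x : Conf n => sorted x.1 := by
  rw [continuous_iff_continuousAt]
  intro x₀
  have hev : ∀ᶠ x : Conf n in nhds x₀, Monotone (x.1 ∘ Tuple.sort x₀.1) := by
    have h : ∀ᶠ x : Conf n in nhds x₀, ∀ i j : Fin n, i < j →
        x.1 (Tuple.sort x₀.1 i) < x.1 (Tuple.sort x₀.1 j) := by
      refine Filter.eventually_all.2 fun i => Filter.eventually_all.2 fun j => ?_
      by_cases hij : i < j
      · have hc : ∀ k, Continuous fun x : Conf n => x.1 k := fun k =>
          (continuous_apply k).comp continuous_subtype_val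
        filter_upwards [((hc _).tendsto x₀).eventually_lt ((hc _).tendsto x₀)
          (sorted_strictMono x₀ hij)] with x hx _ using hx
      · exact Filter.Eventually.of_forall fun x h => absurd h hij
    filter_upwards [h] with x hx
    exact StrictMono.monotone fun i j hij => hx i j hij
  have hcont : Continuous fun x : Conf n => x.1 ∘ Tuple.sort x₀.1 :=
    continuous_pi fun i => (continuous_apply _).comp continuous_subtype_val
  refine hcont.continuousAt.congr ?_
  filter_upwards [hev] with x hx
  exact Tuple.comp_sort_eq_comp_iff_monotone.2 hx

/-- The first entry of a tuple followed by the logarithms of its successive gaps. -/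
noncomputable def logGaps {m : ℕ} (x : Fin (m + 1) → ℝ) : Fin (m + 1) → ℝ :=
  Fin.cons (x 0) fun k : Fin m => Real.log (x k.succ - x k.castSucc)

/-- The increasing tuple with first entry `y 0` and successive gaps `exp (y 1), exp (y 2), …`. -/
noncomputable def ofLogGaps {m : ℕ} (y : Fin (m + 1) → ℝ) : Fin (m + 1) → ℝ :=
  fun i => y 0 + Fin.partialSum (fun k : Fin m => Real.exp (y k.succ)) i

lemma ofLogGaps_zero {m : ℕ} (y : Fin (m + 1) → ℝ) : ofLogGaps y 0 = y 0 := by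
  simp [ofLogGaps]

lemma ofLogGaps_succ {m : ℕ} (y : Fin (m + 1) → ℝ) (k : Fin m) :
    ofLogGaps y k.succ = ofLogGaps y k.castSucc + Real.exp (y k.succ) := by
  simp [ofLogGaps, Fin.partialSum_succ, add_assoc]

lemma ofLogGaps_strictMono {m : ℕ} (y : Fin (m + 1) → ℝ) : StrictMono (ofLogGaps y) :=
  Fin.strictMono_iff_lt_succ.2 fun k => by
    rw [ofLogGaps_succ]
    linarith [Real.exp_pos (y k.succ)]

lemma continuous_ofLogGaps (m : ℕ) : Continuous (ofLogGaps (m := m)) := by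
  refine continuous_pi fun i => ?_
  induction i using Fin.induction with
  | zero => simpa only [ofLogGaps_zero] using continuous_apply 0
  | succ k ih =>
    simp only [ofLogGaps_succ]
    exact ih.add (Real.continuous_exp.comp (continuous_apply _))

lemma logGaps_ofLogGaps {m : ℕ} (y : Fin (m + 1) → ℝ) : logGaps (ofLogGaps y) = y := by
  funext i
  refine Fin.cases ?_ (fun k => ?_) i
  · simp [logGaps, ofLogGaps_zero]
  · simp [logGaps, ofLogGaps_succ]

lemma ofLogGaps_logGaps {m : ℕ} {x : Fin (m + 1) → ℝ} (hx : StrictMono x) :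
    ofLogGaps (logGaps x) = x := by
  funext i
  induction i using Fin.induction with
  | zero => simp [logGaps, ofLogGaps_zero]
  | succ k ih =>
    have h : 0 < x k.succ - x k.castSucc := sub_pos.2 (hx k.castSucc_lt_succ)
    rw [ofLogGaps_succ, ih]
    simp [logGaps, Real.exp_log h]

lemma continuous_logGaps_sorted (m : ℕ) :
    Continuous fun x : Conf (m + 1) => logGaps (sorted x.1) := by
  have hc : ∀ i, Continuous fun x : Conf (m + 1) => sorted x.1 i := fun i =>
    (continuous_apply i).comp (continuous_sorted _)
  refine continuous_pi fun i => ?_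
  refine Fin.cases ?_ (fun k => ?_) i
  · simpa [logGaps] using hc 0
  · simp only [logGaps, Fin.cons_succ]
    exact ((hc _).sub (hc _)).log fun x =>
      (sub_pos.2 (sorted_strictMono x k.castSucc_lt_succ)).ne'

lemma sorted_of_strictMono {n : ℕ} {x : Fin n → ℝ} (hx : StrictMono x) : sorted x = x := by
  rw [sorted, Tuple.sort_eq_refl_iff_monotone.2 hx.monotone]
  rfl

lemma sorted_eq_of_orbitRel {n : ℕ} {x y : Conf n} (h : orbitRel n x y) :
    sorted x.1 = sorted y.1 := by
  obtain ⟨σ, hσ⟩ := h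
  have hy : y.1 = x.1 ∘ ⇑σ⁻¹ := funext hσ
  rw [sorted, sorted, hy, Tuple.comp_perm_comp_sort_eq_comp_sort]

/-- The homeomorphism `B(ℝ, m + 1) ≃ₜ ℝ^(m + 1)` sending a configuration to its least element and
the logarithms of its successive gaps. -/
noncomputable def quotHomeo (m : ℕ) : Quot (orbitRel (m + 1)) ≃ₜ (Fin (m + 1) → ℝ) where
  toFun := Quot.lift (fun x => logGaps (sorted x.1)) fun _ _ h =>
    congrArg logGaps (sorted_eq_of_orbitRel h)
  invFun y := Quot.mk _ ⟨ofLogGaps y, (ofLogGaps_strictMono y).injective⟩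
  left_inv := by
    rintro ⟨x⟩
    refine (Quot.sound ⟨(Tuple.sort x.1)⁻¹, fun i => ?_⟩).symm
    simp only [ofLogGaps_logGaps (sorted_strictMono x), inv_inv]
    rfl
  right_inv y := by
    change logGaps (sorted (ofLogGaps y)) = y
    rw [sorted_of_strictMono (ofLogGaps_strictMono y), logGaps_ofLogGaps]
  continuous_toFun := continuous_quot_lift _ (continuous_logGaps_sorted m)
  continuous_invFun := continuous_quot_mk.comp ((continuous_ofLogGaps m).subtype_mk _)

end ConfReal

/-- The one-point compactification of the unordered configuration space
`B(ℝ, n) = F(ℝ, n)/S_n` of `n` distinct points in `ℝ` is homeomorphic to the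
`n`-dimensional sphere `Sⁿ`. -/
theorem onePoint_unordered_configuration_real_homeomorph_sphere (n : ℕ) (hn : 1 ≤ n) :
    Nonempty (
      OnePoint (Quot (fun x y : {x : Fin n → ℝ // Function.Injective x} =>
        ∃ σ : Equiv.Perm (Fin n), ∀ i, (y : Fin n → ℝ) i = (x : Fin n → ℝ) (σ⁻¹ i))) ≃ₜ
      Metric.sphere (0 : EuclideanSpace ℝ (Fin (n + 1))) 1) := by
  obtain ⟨m, rfl⟩ := Nat.exists_eq_add_of_le' hn
  exact ⟨(ConfReal.quotHomeo m).onePointCongr.trans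
    (onePointEquivSphereOfFinrankEq (by simp))⟩
end
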